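/- For every finite simple graph G, the maximum over all orientations G⃗ of G of the fractional directed local chromatic number ψ_d*(G⃗) equals the fractional chromatic number χ*(G). -/

import Mathlib

open Classical

/-- The underlying undirected simple graph of a digraph given by an arc relation `D`. -/
def underlying {V : Type*} (D : V → V → Prop) : SimpleGraph V := SimpleGraph.fromRel D

/-- `A` is an independent set of the simple graph `G`. -/
def IsIndepF {V : Type*} (G : SimpleGraph V) (A : Finset V) : Prop :=
  ∀ u ∈ A, ∀ v ∈ A, ¬ G.Adj u v

/-- A fractional coloring of `G`: nonnegative weights on the independent sets of `G` such
that the sets containing any fixed vertex have total weight at least `1`. -/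
structure FracColoring {V : Type*} [Fintype V] (G : SimpleGraph V) where
  x : Finset V → ℝ
  nonneg : ∀ A, 0 ≤ x A
  supp : ∀ A, x A ≠ 0 → IsIndepF G A
  cover : ∀ v : V, 1 ≤ ∑ A : Finset V, if v ∈ A then x A else 0

/-- The total weight of a fractional coloring. -/
noncomputable def totalWeight {V : Type*} [Fintype V] {G : SimpleGraph V}
    (f : FracColoring G) : ℝ :=
  ∑ A : Finset V, f.x A

/-- The fractional chromatic number `χ*(G)`: the minimum total weight of a fractional
coloring of `G`. -/
noncomputable def fracChrom {V : Type*} [Fintype V] (G : SimpleGraph V) : ℝ :=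
  sInf {w : ℝ | ∃ f : FracColoring G, w = totalWeight f}

/-- The local weight of a fractional coloring of a digraph `D`:
`1` plus the maximum over vertices `v` of the total weight of the independent sets meeting
the out-neighborhood of `v`. -/
noncomputable def localWeight {V : Type*} [Fintype V] (D : V → V → Prop)
    (f : FracColoring (underlying D)) : ℝ :=
  1 + ⨆ v : V, ∑ A : Finset V, if ∃ u ∈ A, D v u then f.x A else 0

/-- The fractional directed local chromatic number `ψ_d*(D)`: the minimum local weight of a
fractional coloring of `D`. -/
noncomputable def fracDirLocal {V : Type*} [Fintype V] (D : V → V → Prop) : ℝ :=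
  sInf {w : ℝ | ∃ f : FracColoring (underlying D), w = localWeight D f}

/-- `D` is an orientation of the simple graph `G`: every arc of `D` lies on an edge of `G`,
and every edge of `G` carries exactly one of its two possible orientations as an arc. -/
def IsOrientation {V : Type*} (G : SimpleGraph V) (D : V → V → Prop) : Prop :=
  (∀ u v, D u v → G.Adj u v) ∧ (∀ u v, G.Adj u v → (D u v ↔ ¬ D v u))

/-!
Splitting the total weight of a fractional coloring at a vertex `v` into the sets containing `v`
and the sets meeting its out-neighborhood shows that no orientation beats `χ*`. Conversely, linear
programming duality (here von Neumann's minimax theorem for the incidence game between vertices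
and independent sets) gives vertex weights `w` of total `1` with `χ* · w(A) ≤ 1` for every
independent set `A`. Take `A₀` independent of maximum weight and orient the edges so that `A₀`
consists of sources. For any independent `A`, replacing the neighbors of `A` in `A₀` by `A \ A₀`
cannot increase the weight, so `w(A \ A₀) ≤ w(A₀ ∩ N(A))`. Averaging this over a fractional
coloring of local weight `L` gives `1 - w(A₀) ≤ (L - 1) w(A₀)`, whence `χ* ≤ 1 / w(A₀) ≤ L`.
-/

section Minimax

open scoped Matrix

theorem exists_isSaddlePointOn_bilinear {E F : Type*}
    [TopologicalSpace E] [AddCommGroup E] [Module ℝ E] [IsTopologicalAddGroup E]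
    [ContinuousSMul ℝ E] [T2Space E] [FiniteDimensional ℝ E]
    [TopologicalSpace F] [AddCommGroup F] [Module ℝ F] [IsTopologicalAddGroup F]
    [ContinuousSMul ℝ F] [T2Space F] [FiniteDimensional ℝ F]
    {X : Set E} {Y : Set F} (hX : Convex ℝ X) (hXne : X.Nonempty) (hXc : IsCompact X)
    (hY : Convex ℝ Y) (hYne : Y.Nonempty) (hYc : IsCompact Y) (B : E →ₗ[ℝ] F →ₗ[ℝ] ℝ) :
    ∃ a ∈ X, ∃ b ∈ Y, IsSaddlePointOn X Y (fun x y => B x y) a b :=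
  Sion.exists_isSaddlePointOn hXne hX hXc
    (fun y _ => (B.flip y).continuous_of_finiteDimensional.continuousOn.lowerSemicontinuousOn)
    (fun y _ => ((B.flip y).convexOn hX).quasiconvexOn)
    hY hYne hYc
    (fun x _ => (B x).continuous_of_finiteDimensional.continuousOn.upperSemicontinuousOn)
    (fun x _ => ((B x).concaveOn hY).quasiconcaveOn)

theorem exists_optimal_mixed_strategies {ι κ : Type*} [Fintype ι] [Nonempty ι] [Fintype κ]
    [Nonempty κ] (M : Matrix ι κ ℝ) :
    ∃ p ∈ stdSimplex ℝ ι, ∃ q ∈ stdSimplex ℝ κ, ∃ m : ℝ,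
      (∀ j, m ≤ (p ᵥ* M) j) ∧ ∀ i, (M *ᵥ q) i ≤ m := by
  obtain ⟨q, hq, p, hp, hsaddle⟩ := exists_isSaddlePointOn_bilinear
    (convex_stdSimplex ℝ κ) .of_subtype (isCompact_stdSimplex ℝ κ)
    (convex_stdSimplex ℝ ι) .of_subtype (isCompact_stdSimplex ℝ ι)
    (Matrix.toLinearMap₂' ℝ M).flip
  simp only [IsSaddlePointOn, LinearMap.flip_apply, Matrix.toLinearMap₂'_apply'] at hsaddle
  refine ⟨p, hp, q, hq, p ⬝ᵥ M *ᵥ q, fun j => ?_, fun i => ?_⟩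
  · simpa [Matrix.dotProduct_mulVec, -Matrix.mulVec_single] using
      hsaddle _ (single_mem_stdSimplex ℝ j) p hp
  · simpa using hsaddle q hq _ (single_mem_stdSimplex ℝ i)

end Minimax

section IndependentSets

variable {V : Type*} {G : SimpleGraph V} {A B A₀ : Finset V} {w : V → ℝ}

lemma isIndepF_empty : IsIndepF G ∅ := by
  simp [IsIndepF]

lemma isIndepF_singleton (v : V) : IsIndepF G {v} := by
  simp [IsIndepF]

lemma IsIndepF.mono (hB : IsIndepF G B) (hAB : A ⊆ B) : IsIndepF G A :=
  fun u hu v hv => hB u (hAB hu) v (hAB hv)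

lemma IsIndepF.union (hA : IsIndepF G A) (hB : IsIndepF G B)
    (hAB : ∀ u ∈ A, ∀ v ∈ B, ¬ G.Adj v u) : IsIndepF G (A ∪ B) := by
  intro u hu v hv huv
  rcases Finset.mem_union.1 hu with hu | hu <;> rcases Finset.mem_union.1 hv with hv | hv
  · exact hA u hu v hv huv
  · exact hAB u hu v hv huv.symm
  · exact hAB v hv u hu huv
  · exact hB u hu v hv huv

/-- `A₀` is a maximum-weight independent set of `G` with respect to the vertex weights `w`. -/
structure IsMaxWeightIndep (G : SimpleGraph V) (w : V → ℝ) (A₀ : Finset V) : Prop where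
  isIndepF : IsIndepF G A₀
  sum_le : ∀ A, IsIndepF G A → ∑ v ∈ A, w v ≤ ∑ v ∈ A₀, w v

lemma exists_isMaxWeightIndep [Finite V] (G : SimpleGraph V) (w : V → ℝ) :
    ∃ A₀, IsMaxWeightIndep G w A₀ := by
  obtain ⟨A₀, hA₀, hmax⟩ := Set.exists_max_image {A | IsIndepF G A} (fun A => ∑ v ∈ A, w v)
    (Set.toFinite _) ⟨∅, isIndepF_empty⟩
  exact ⟨A₀, hA₀, hmax⟩

lemma IsMaxWeightIndep.sum_pos [Fintype V] (h : IsMaxWeightIndep G w A₀) (hw : 0 < ∑ v, w v) :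
    0 < ∑ v ∈ A₀, w v := by
  obtain ⟨v, -, hv⟩ : ∃ v ∈ Finset.univ, 0 < w v :=
    Finset.exists_lt_of_sum_lt (by simpa using hw)
  exact hv.trans_le (by simpa using h.sum_le {v} (isIndepF_singleton v))

lemma IsMaxWeightIndep.sum_sdiff_le (h : IsMaxWeightIndep G w A₀) (hA : IsIndepF G A) :
    ∑ v ∈ A \ A₀, w v ≤ ∑ v ∈ A₀ with ∃ u ∈ A, G.Adj v u, w v := by
  set B := A₀.filter fun v => ¬ ∃ u ∈ A, G.Adj v u
  have hindep : IsIndepF G (A \ A₀ ∪ B) :=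
    (hA.mono Finset.sdiff_subset).union (h.isIndepF.mono (Finset.filter_subset _ _))
      fun u hu v hv hvu => (Finset.mem_filter.1 hv).2 ⟨u, (Finset.mem_sdiff.1 hu).1, hvu⟩
  have hdisj : Disjoint (A \ A₀) B :=
    Finset.sdiff_disjoint.mono_right (Finset.filter_subset _ _)
  have hexchange : ∑ v ∈ A \ A₀, w v + ∑ v ∈ B, w v ≤ ∑ v ∈ A₀, w v := by
    rw [← Finset.sum_union hdisj]
    exact h.sum_le _ hindep
  have hsplit := Finset.sum_filter_add_sum_filter_not A₀ (fun v => ∃ u ∈ A, G.Adj v u) w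
  linarith

end IndependentSets

namespace FracColoring

variable {V : Type*} [Fintype V] {G : SimpleGraph V}

instance : Nonempty (FracColoring G) := by
  refine ⟨⟨fun A => if A.card = 1 then 1 else 0, fun A => by positivity, fun A hA => ?_,
    fun v => ?_⟩⟩
  · obtain ⟨v, rfl⟩ : ∃ v, A = {v} := Finset.card_eq_one.1 (by simpa using hA)
    exact isIndepF_singleton v
  · have hsingle := Finset.single_le_sum (s := Finset.univ)
      (f := fun A : Finset V => if v ∈ A then (if A.card = 1 then (1 : ℝ) else 0) else 0)
      (fun A _ => by positivity) (Finset.mem_univ {v})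
    simpa using hsingle

lemma totalWeight_nonneg (f : FracColoring G) : 0 ≤ totalWeight f :=
  Finset.sum_nonneg fun A _ => f.nonneg A

/-- The total weight of the independent sets meeting `S`. For `S` the out-neighborhood of a vertex
it is the quantity maximized in `localWeight`; for `S = {v}` it is the one bounded in `cover`. -/
noncomputable def weightMeeting (f : FracColoring G) (S : Set V) : ℝ :=
  ∑ A : Finset V, if ∃ u ∈ A, u ∈ S then f.x A else 0

lemma weightMeeting_nonneg (f : FracColoring G) (S : Set V) : 0 ≤ f.weightMeeting S :=
  Finset.sum_nonneg fun A _ => by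
    have := f.nonneg A
    positivity

lemma one_le_weightMeeting_singleton (f : FracColoring G) (v : V) : 1 ≤ f.weightMeeting {v} := by
  simpa [weightMeeting] using f.cover v

lemma weightMeeting_add_one_le_totalWeight (f : FracColoring G) {S : Set V} {v : V}
    (hS : S ⊆ G.neighborSet v) : f.weightMeeting S + 1 ≤ totalWeight f := by
  have hterm (A : Finset V) :
      (if ∃ u ∈ A, u ∈ S then f.x A else 0) + (if v ∈ A then f.x A else 0) ≤ f.x A := by
    have hnonneg := f.nonneg A
    by_cases hSA : ∃ u ∈ A, u ∈ S
    · by_cases hv : v ∈ A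
      · obtain ⟨u, hu, huS⟩ := hSA
        have hzero : f.x A = 0 := by_contra fun hne => f.supp A hne v hv u hu (hS huS)
        simp [hzero]
      · simp [hSA, hv]
    · rw [if_neg hSA]
      split_ifs <;> linarith
  calc f.weightMeeting S + 1
      ≤ f.weightMeeting S + ∑ A : Finset V, (if v ∈ A then f.x A else 0) := by
        gcongr
        exact f.cover v
    _ ≤ totalWeight f := by
        rw [weightMeeting, ← Finset.sum_add_distrib]
        exact Finset.sum_le_sum fun A _ => hterm A

lemma sum_mul_weightMeeting (f : FracColoring G) (w : V → ℝ) (B : Finset V) (S : V → Set V) :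
    ∑ v ∈ B, w v * f.weightMeeting (S v) =
      ∑ A : Finset V, f.x A * ∑ v ∈ B with ∃ u ∈ A, u ∈ S v, w v := by
  simp only [weightMeeting, Finset.mul_sum, Finset.sum_filter]
  rw [Finset.sum_comm]
  refine Finset.sum_congr rfl fun A _ => Finset.sum_congr rfl fun v _ => ?_
  split_ifs <;> ring

lemma sum_compl_le_sum_mul_weightMeeting (f : FracColoring G) {w : V → ℝ} {A₀ : Finset V}
    (hw : 0 ≤ w) (h : IsMaxWeightIndep G w A₀) :
    ∑ v ∈ A₀ᶜ, w v ≤ ∑ v ∈ A₀, w v * f.weightMeeting (G.neighborSet v) := by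
  calc ∑ v ∈ A₀ᶜ, w v
      ≤ ∑ v ∈ A₀ᶜ, w v * f.weightMeeting {v} := Finset.sum_le_sum fun v _ =>
        le_mul_of_one_le_right (hw v) (f.one_le_weightMeeting_singleton v)
    _ = ∑ A : Finset V, f.x A * ∑ v ∈ A \ A₀, w v := by
        rw [f.sum_mul_weightMeeting w A₀ᶜ]
        refine Finset.sum_congr rfl fun A _ => ?_
        congr 2
        ext v
        simp [and_comm]
    _ ≤ ∑ A : Finset V, f.x A * ∑ v ∈ A₀ with ∃ u ∈ A, u ∈ G.neighborSet v, w v := by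
        refine Finset.sum_le_sum fun A _ => ?_
        by_cases hA : f.x A = 0
        · simp [hA]
        · exact mul_le_mul_of_nonneg_left (h.sum_sdiff_le (f.supp A hA)) (f.nonneg A)
    _ = ∑ v ∈ A₀, w v * f.weightMeeting (G.neighborSet v) :=
        (f.sum_mul_weightMeeting w A₀ _).symm

end FracColoring

section Duality

open scoped Matrix

variable {V : Type*} [Fintype V] {G : SimpleGraph V}

lemma fracChrom_le_totalWeight (f : FracColoring G) : fracChrom G ≤ totalWeight f := by
  refine csInf_le ⟨0, ?_⟩ ⟨f, rfl⟩
  rintro _ ⟨g, rfl⟩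
  exact g.totalWeight_nonneg

lemma le_fracChrom {c : ℝ} (h : ∀ f : FracColoring G, c ≤ totalWeight f) : c ≤ fracChrom G := by
  refine le_csInf ⟨_, Classical.arbitrary (FracColoring G), rfl⟩ ?_
  rintro _ ⟨f, rfl⟩
  exact h f

/-- The incidence matrix between independent sets and vertices of `G`. Its rows are indexed by all
sets of vertices, those of the dependent sets being zero. -/
noncomputable def indepIncMatrix (G : SimpleGraph V) : Matrix (Finset V) V ℝ :=
  Matrix.of fun A v => if IsIndepF G A ∧ v ∈ A then 1 else 0

lemma indepIncMatrix_mulVec {A : Finset V} (hA : IsIndepF G A) (w : V → ℝ) :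
    (indepIncMatrix G *ᵥ w) A = ∑ v ∈ A, w v := by
  simp [indepIncMatrix, Matrix.mulVec, dotProduct, hA]

lemma vecMul_indepIncMatrix (p : Finset V → ℝ) (v : V) :
    (p ᵥ* indepIncMatrix G) v = ∑ A : Finset V, if IsIndepF G A ∧ v ∈ A then p A else 0 := by
  simp [indepIncMatrix, Matrix.vecMul, dotProduct]

lemma fracChrom_mul_le_sum {p : Finset V → ℝ} (hp : 0 ≤ p) {m : ℝ} (hm : 0 < m)
    (hcover : ∀ v, m ≤ (p ᵥ* indepIncMatrix G) v) : fracChrom G * m ≤ ∑ A, p A := by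
  let f : FracColoring G :=
    { x := fun A => if IsIndepF G A then p A / m else 0
      nonneg := fun A => by
        have : 0 ≤ p A := hp A
        split_ifs <;> positivity
      supp := fun A hA => by_contra fun hdep => hA (if_neg hdep)
      cover := fun v => by
        calc 1 ≤ (p ᵥ* indepIncMatrix G) v / m := (one_le_div hm).2 (hcover v)
          _ = ∑ A : Finset V, if v ∈ A then (if IsIndepF G A then p A / m else 0) else 0 := by
            rw [vecMul_indepIncMatrix, Finset.sum_div]
            refine Finset.sum_congr rfl fun A _ => ?_
            split_ifs <;> simp_all }
  calc fracChrom G * m ≤ totalWeight f * m := by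
        gcongr
        exact fracChrom_le_totalWeight f
    _ ≤ (∑ A, p A / m) * m := by
        refine mul_le_mul_of_nonneg_right (Finset.sum_le_sum fun A _ => ?_) hm.le
        have : 0 ≤ p A / m := div_nonneg (hp A) hm.le
        simp only [f]
        split_ifs <;> simp [this]
    _ = ∑ A, p A := by
        rw [← Finset.sum_div, div_mul_cancel₀ _ hm.ne']

theorem exists_dual_weight [Nonempty V] (G : SimpleGraph V) :
    ∃ w ∈ stdSimplex ℝ V, ∀ A, IsIndepF G A → fracChrom G * ∑ v ∈ A, w v ≤ 1 := by
  obtain ⟨p, hp, w, hw, m, hcover, hpack⟩ := exists_optimal_mixed_strategies (indepIncMatrix G)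
  have hsum (A) (hA : IsIndepF G A) : ∑ v ∈ A, w v ≤ m :=
    indepIncMatrix_mulVec hA w ▸ hpack A
  have hm : 0 < m := by
    obtain ⟨A₀, hA₀⟩ := exists_isMaxWeightIndep G w
    exact (hA₀.sum_pos (hw.2 ▸ one_pos)).trans_le (hsum A₀ hA₀.isIndepF)
  refine ⟨w, hw, fun A hA => ?_⟩
  calc fracChrom G * ∑ v ∈ A, w v
      ≤ fracChrom G * m := by
        gcongr
        · exact le_fracChrom fun f => f.totalWeight_nonneg
        · exact hsum A hA
    _ ≤ ∑ A, p A := fracChrom_mul_le_sum hp.1 hm hcover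
    _ = 1 := hp.2

end Duality

section Orientations

variable {V : Type*} {G : SimpleGraph V} {D : V → V → Prop}

lemma IsOrientation.irrefl (h : IsOrientation G D) (v : V) : ¬ D v v :=
  fun hv => G.irrefl (h.1 v v hv)

lemma IsOrientation.underlying_eq (h : IsOrientation G D) : underlying D = G := by
  ext u v
  rw [underlying, SimpleGraph.fromRel_adj]
  constructor
  · rintro ⟨-, huv | hvu⟩
    · exact h.1 u v huv
    · exact (h.1 v u hvu).symm
  · intro huv
    have := h.2 u v huv
    exact ⟨huv.ne, by tauto⟩

lemma neighborSet_underlying_of_source {v : V} (hv : ∀ u, ¬ D u v) :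
    (underlying D).neighborSet v = {u | D v u} := by
  ext u
  simp only [underlying, SimpleGraph.mem_neighborSet, SimpleGraph.fromRel_adj, hv, or_false,
    Set.mem_ofPred_eq, and_iff_right_iff_imp]
  rintro huv rfl
  exact hv v huv

lemma exists_isOrientation_forall_source {A : Finset V} (hA : IsIndepF G A) :
    ∃ D, IsOrientation G D ∧ ∀ v ∈ A, ∀ u, ¬ D u v := by
  refine ⟨fun u v => G.Adj u v ∧ v ∉ A ∧ (u ∈ A ∨ WellOrderingRel u v),
    ⟨fun u v h => h.1, fun u v huv => ?_⟩, fun v hv u h => h.2.1 hv⟩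
  have hvu := huv.symm
  have hnot : u ∈ A → v ∉ A := fun hu hv => hA u hu v hv huv
  have hasymm : WellOrderingRel u v → ¬ WellOrderingRel v u := asymm
  have htotal : WellOrderingRel u v ∨ WellOrderingRel v u :=
    (trichotomous_of WellOrderingRel u v).imp_right (Or.resolve_left · huv.ne)
  tauto

end Orientations

section LocalWeight

variable {V : Type*} [Fintype V] {D : V → V → Prop}

lemma one_le_localWeight (f : FracColoring (underlying D)) : 1 ≤ localWeight D f :=
  le_add_of_nonneg_right (Real.iSup_nonneg fun v => f.weightMeeting_nonneg {u | D v u})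

lemma weightMeeting_add_one_le_localWeight (f : FracColoring (underlying D)) (v : V) :
    f.weightMeeting {u | D v u} + 1 ≤ localWeight D f := by
  rw [add_comm]
  exact add_le_add_right
    (le_ciSup (f := fun v => f.weightMeeting {u | D v u}) (Set.finite_range _).bddAbove v) 1

lemma localWeight_le_totalWeight [Nonempty V] (hD : ∀ v, ¬ D v v)
    (f : FracColoring (underlying D)) : localWeight D f ≤ totalWeight f := by
  have hsub (v : V) : {u | D v u} ⊆ (underlying D).neighborSet v := fun u huv =>
    (SimpleGraph.fromRel_adj D v u).2 ⟨fun h => hD v (h ▸ huv), Or.inl huv⟩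
  rw [localWeight, ← le_sub_iff_add_le']
  exact ciSup_le fun v =>
    le_sub_iff_add_le.2 (f.weightMeeting_add_one_le_totalWeight (hsub v))

lemma fracDirLocal_le_localWeight (f : FracColoring (underlying D)) :
    fracDirLocal D ≤ localWeight D f := by
  refine csInf_le ⟨1, ?_⟩ ⟨f, rfl⟩
  rintro _ ⟨g, rfl⟩
  exact one_le_localWeight g

lemma le_fracDirLocal {c : ℝ} (h : ∀ f : FracColoring (underlying D), c ≤ localWeight D f) :
    c ≤ fracDirLocal D := by
  refine le_csInf ⟨_, Classical.arbitrary (FracColoring (underlying D)), rfl⟩ ?_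
  rintro _ ⟨f, rfl⟩
  exact h f

theorem fracDirLocal_le_fracChrom_underlying [Nonempty V] (hD : ∀ v, ¬ D v v) :
    fracDirLocal D ≤ fracChrom (underlying D) :=
  le_fracChrom fun f => (fracDirLocal_le_localWeight f).trans (localWeight_le_totalWeight hD f)

theorem IsMaxWeightIndep.sum_le_localWeight_mul {w : V → ℝ} {A₀ : Finset V}
    (h : IsMaxWeightIndep (underlying D) w A₀) (hw : 0 ≤ w)
    (hsource : ∀ v ∈ A₀, ∀ u, ¬ D u v) (f : FracColoring (underlying D)) :
    ∑ v, w v ≤ localWeight D f * ∑ v ∈ A₀, w v := by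
  have hlocal (v) (hv : v ∈ A₀) :
      f.weightMeeting ((underlying D).neighborSet v) ≤ localWeight D f - 1 := by
    rw [neighborSet_underlying_of_source (hsource v hv)]
    exact le_sub_iff_add_le.2 (weightMeeting_add_one_le_localWeight f v)
  calc ∑ v, w v
      = ∑ v ∈ A₀, w v + ∑ v ∈ A₀ᶜ, w v := (Finset.sum_add_sum_compl A₀ w).symm
    _ ≤ ∑ v ∈ A₀, w v + ∑ v ∈ A₀, w v * f.weightMeeting ((underlying D).neighborSet v) := by
        gcongr
        exact f.sum_compl_le_sum_mul_weightMeeting hw h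
    _ ≤ ∑ v ∈ A₀, w v + ∑ v ∈ A₀, w v * (localWeight D f - 1) := by
        gcongr with v hv
        · exact hw v
        · exact hlocal v hv
    _ = localWeight D f * ∑ v ∈ A₀, w v := by
        rw [← Finset.sum_mul]
        ring

end LocalWeight

/-- For every finite simple graph `G`, the maximum of `ψ_d*(D)` over all orientations `D` of
`G` equals (and is attained at) the fractional chromatic number `χ*(G)`. -/
theorem stmt4 {V : Type} [Fintype V] [Nonempty V] (G : SimpleGraph V) :
    IsGreatest {w : ℝ | ∃ D : V → V → Prop, IsOrientation G D ∧ w = fracDirLocal D}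
      (fracChrom G) := by
  constructor
  · obtain ⟨w, ⟨hw, hsum⟩, hdual⟩ := exists_dual_weight G
    obtain ⟨A₀, hA₀⟩ := exists_isMaxWeightIndep G w
    obtain ⟨D, hD, hsource⟩ := exists_isOrientation_forall_source hA₀.isIndepF
    obtain rfl := hD.underlying_eq
    refine ⟨D, hD, le_antisymm (le_fracDirLocal fun f => ?_)
      (fracDirLocal_le_fracChrom_underlying hD.irrefl)⟩
    refine le_of_mul_le_mul_right ?_ (hA₀.sum_pos (hsum ▸ one_pos))
    calc fracChrom (underlying D) * ∑ v ∈ A₀, w v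
        ≤ 1 := hdual A₀ hA₀.isIndepF
      _ = ∑ v, w v := hsum.symm
      _ ≤ localWeight D f * ∑ v ∈ A₀, w v := hA₀.sum_le_localWeight_mul hw hsource f
  · rintro _ ⟨D, hD, rfl⟩
    obtain rfl := hD.underlying_eq
    exact fracDirLocal_le_fracChrom_underlying hD.irrefl
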